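/- arXiv:math/0505266 — 2 statements merged into one kernel-verified Lean document; each statement's English description precedes it below -/
import Mathlib

section
/- Let p, δ₀, a, b, c be integers with δ₀ ≥ 1, 2δ₀ ≤ p − 3, a even, a + b + 2c = 2p − 2, a ≤ c, c ≤ δ₀ + 2, a ≤ δ₀ + 2, a + c ≥ 2δ₀ + 2, a ≤ b, and a·b ≤ c². Then either p ≤ 2δ₀ + 5 (equivalently 2δ₀ ≥ p − 5), or δ₀ = 2 and p = 10. -/
/-!
The bounds `2δ₀ + 2 ≤ a + c`, `a ≤ c ≤ δ₀ + 2` leave four possibilities for `(a, c)`: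
`c = a ∈ {δ₀ + 1, δ₀ + 2}`, `(δ₀ + 1, δ₀ + 2)` and `(δ₀, δ₀ + 2)`. If `p ≥ 2δ₀ + 6`, then
`b ≥ 4δ₀ + 10 - a - 2c`. In the first three cases this contradicts `a * b ≤ c ^ 2`. In the last,
with `a = δ₀`, it gives `b ≥ δ₀ + 6`, so `δ₀ * (δ₀ + 6) ≤ (δ₀ + 2) ^ 2`, i.e. `δ₀ ≤ 2`; evenness
of `a = δ₀` excludes `δ₀ = 1`, and `δ₀ = 2` forces `b = 8`, `p = 10`.
-/


/-- Numerical skeleton of the dichotomy in Theorem 2: with `a = D²`, `b = D'²`,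
`c = D·D'`, `L² = a + b + 2c = 2p − 2`, the Reider-type conditions, the Bezout
bound `a + c ≥ 2δ₀ + 2`, and the Hodge index bound `a·b ≤ c²`, if `δ₀ ≥ 1` and
`2δ₀ ≤ p − 3`, then either `p ≤ 2δ₀ + 5` (equivalently `2δ₀ ≥ p − 5`), or
`δ₀ = 2` and `p = 10`. -/
theorem theorem2_dichotomy (p δ₀ a b c : ℤ) (hδ : δ₀ ≥ 1) (hp : 2 * δ₀ ≤ p - 3)
    (haeven : Even a) (hL : a + b + 2 * c = 2 * p - 2)
    (hac : a ≤ c) (hc : c ≤ δ₀ + 2) (ha : a ≤ δ₀ + 2)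
    (hbez : a + c ≥ 2 * δ₀ + 2) (hab : a ≤ b) (hodge : a * b ≤ c ^ 2) :
    p ≤ 2 * δ₀ + 5 ∨ (δ₀ = 2 ∧ p = 10) := by
  by_contra! h
  obtain ⟨h6, hne⟩ := h
  obtain ⟨k, hk⟩ := haeven
  have hcases : c = a ∨ (a = δ₀ + 1 ∧ c = δ₀ + 2) ∨ (a = δ₀ ∧ c = δ₀ + 2) := by omega
  rcases hcases with rfl | ⟨rfl, rfl⟩ | ⟨rfl, rfl⟩
  · have hb : c + 2 ≤ b := by omega
    nlinarith
  · have hb : δ₀ + 5 ≤ b := by omega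
    nlinarith
  · have hb : a + 6 ≤ b := by omega
    have ha2 : a ≤ 2 := by nlinarith
    obtain rfl : a = 2 := by omega
    omega
end

section
/- Let p, δ₀, a, b, c be integers with δ₀ ≥ 1, 2δ₀ ≤ p − 3, a even, a + b + 2c = 2p − 2, a ≤ c, c ≤ δ₀ + 2, a ≤ δ₀ + 2, a + c ≥ 2δ₀ + 2, a ≤ b, and a·b ≤ c². Then δ₀ ≤ a ≤ δ₀ + 2 and exactly one of the following holds: (1) δ₀ is even, a = δ₀ + 2, c = δ₀ + 2, b = δ₀ + 2 and p = 2δ₀ + 5; (2) δ₀ is odd, a = δ₀ + 1, c = δ₀ + 1, b = δ₀ + 1 and p = 2δ₀ + 3; (3) δ₀ is odd, a = δ₀ + 1, c = δ₀ + 2, and either b = δ₀ + 1 with p = 2δ₀ + 4 or b = δ₀ + 3 with p = 2δ₀ + 5; (4) δ₀ is even, a = δ₀, c = δ₀ + 2, and either b ∈ {δ₀, δ₀ + 2, δ₀ + 4} with correspondingly p ∈ {2δ₀ + 3, 2δ₀ + 4, 2δ₀ + 5}, or δ₀ = 2, b = 8 and p = 10. -/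
/-!
The linear constraints leave only `(a, c) = (δ₀ + 2, δ₀ + 2)`, `(δ₀ + 1, δ₀ + 1)`,
`(δ₀ + 1, δ₀ + 2)` and `(δ₀, δ₀ + 2)`. In each of them put `k = (D' - D)² = a + b - 2c`, which
is even because `a + b + 2c` is. The Hodge inequality `a * b ≤ c ^ 2` is equivalent to
`a * k ≤ (c - a) ^ 2 ≤ 4`, and `a ≥ 2` since `a` is positive and even. Hence `k ≤ 0`, except
that `a = k = 2` is possible when `c = a + 2`; this exception is `δ₀ = 2`, `b = 8`. Together with
`a ≤ b`, this determines `b`, and then `p`.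
-/

/-- Case (1) in the numerical analysis of Theorem 2:
`δ₀` even, `a = δ₀ + 2`, `c = δ₀ + 2`, `b = δ₀ + 2` and `p = 2δ₀ + 5`. -/
def Thm2Case1 (δ₀ a b c p : ℤ) : Prop :=
  Even δ₀ ∧ a = δ₀ + 2 ∧ c = δ₀ + 2 ∧ b = δ₀ + 2 ∧ p = 2 * δ₀ + 5

/-- Case (2): `δ₀` odd, `a = δ₀ + 1`, `c = δ₀ + 1`, `b = δ₀ + 1` and `p = 2δ₀ + 3`. -/
def Thm2Case2 (δ₀ a b c p : ℤ) : Prop :=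
  Odd δ₀ ∧ a = δ₀ + 1 ∧ c = δ₀ + 1 ∧ b = δ₀ + 1 ∧ p = 2 * δ₀ + 3

/-- Case (3): `δ₀` odd, `a = δ₀ + 1`, `c = δ₀ + 2`, and either `b = δ₀ + 1` with
`p = 2δ₀ + 4` or `b = δ₀ + 3` with `p = 2δ₀ + 5`. -/
def Thm2Case3 (δ₀ a b c p : ℤ) : Prop :=
  Odd δ₀ ∧ a = δ₀ + 1 ∧ c = δ₀ + 2 ∧
    ((b = δ₀ + 1 ∧ p = 2 * δ₀ + 4) ∨ (b = δ₀ + 3 ∧ p = 2 * δ₀ + 5))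

/-- Case (4): `δ₀` even, `a = δ₀`, `c = δ₀ + 2`, and either
`b ∈ {δ₀, δ₀ + 2, δ₀ + 4}` with correspondingly `p ∈ {2δ₀ + 3, 2δ₀ + 4, 2δ₀ + 5}`,
or `δ₀ = 2`, `b = 8` and `p = 10`. -/
def Thm2Case4 (δ₀ a b c p : ℤ) : Prop :=
  Even δ₀ ∧ a = δ₀ ∧ c = δ₀ + 2 ∧
    ((b = δ₀ ∧ p = 2 * δ₀ + 3) ∨ (b = δ₀ + 2 ∧ p = 2 * δ₀ + 4) ∨
      (b = δ₀ + 4 ∧ p = 2 * δ₀ + 5) ∨ (δ₀ = 2 ∧ b = 8 ∧ p = 10))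

/-- The even integer `k` stands for `(D' - D)²`, and `d` for `c - a`. -/
lemma hodge_gap {a k d : ℤ} (ha : 2 ≤ a) (hae : Even a) (hk : Even k) (hd0 : 0 ≤ d)
    (hd : d ≤ 2) (h : a * k ≤ d ^ 2) : k ≤ 0 ∨ (d = 2 ∧ a = 2 ∧ k = 2) := by
  by_cases hk0 : k ≤ 0
  · exact Or.inl hk0
  right
  obtain ⟨m, rfl⟩ := hae
  obtain ⟨n, rfl⟩ := hk
  have hm : 1 ≤ m := by omega
  have hn : 1 ≤ n := by omega
  have hd2 : d = 2 := by
    by_contra hne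
    have : d ≤ 1 := by omega
    nlinarith
  subst hd2
  have hm1 : m ≤ 1 := by nlinarith
  have hn1 : n ≤ 1 := by nlinarith
  omega

/-- Complete numerical case analysis in the proof of Theorem 2: with `a = D²`,
`b = D'²`, `c = D·D'`, `a + b + 2c = L² = 2p − 2`, the Reider-type conditions,
the Bezout bound `a + c ≥ 2δ₀ + 2` and the Hodge index bound `a·b ≤ c²`, one has
`δ₀ ≤ a ≤ δ₀ + 2` and exactly one of the four cases holds. -/
theorem theorem2_case_analysis (p δ₀ a b c : ℤ) (hδ : δ₀ ≥ 1) (hp : 2 * δ₀ ≤ p - 3)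
    (haeven : Even a) (hL : a + b + 2 * c = 2 * p - 2)
    (hac : a ≤ c) (hc : c ≤ δ₀ + 2) (ha : a ≤ δ₀ + 2)
    (hbez : a + c ≥ 2 * δ₀ + 2) (hab : a ≤ b) (hodge : a * b ≤ c ^ 2) :
    (δ₀ ≤ a ∧ a ≤ δ₀ + 2) ∧
    (Thm2Case1 δ₀ a b c p ∨ Thm2Case2 δ₀ a b c p ∨
      Thm2Case3 δ₀ a b c p ∨ Thm2Case4 δ₀ a b c p) ∧
    ¬(Thm2Case1 δ₀ a b c p ∧ Thm2Case2 δ₀ a b c p) ∧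
    ¬(Thm2Case1 δ₀ a b c p ∧ Thm2Case3 δ₀ a b c p) ∧
    ¬(Thm2Case1 δ₀ a b c p ∧ Thm2Case4 δ₀ a b c p) ∧
    ¬(Thm2Case2 δ₀ a b c p ∧ Thm2Case3 δ₀ a b c p) ∧
    ¬(Thm2Case2 δ₀ a b c p ∧ Thm2Case4 δ₀ a b c p) ∧
    ¬(Thm2Case3 δ₀ a b c p ∧ Thm2Case4 δ₀ a b c p) := by
  have hk : Even (a + b - 2 * c) := ⟨p - 1 - 2 * c, by linarith⟩
  have ha2 : 2 ≤ a := by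
    obtain ⟨m, rfl⟩ := haeven
    omega
  have key := hodge_gap (d := c - a) ha2 haeven hk (by linarith) (by omega) (by nlinarith)
  simp only [Thm2Case1, Thm2Case2, Thm2Case3, Thm2Case4, Int.even_iff, Int.odd_iff] at *
  refine ⟨?_, ?_, ?_, ?_, ?_, ?_, ?_, ?_⟩
  · omega
  · have hcases : (a = δ₀ + 2 ∧ c = δ₀ + 2) ∨ (a = δ₀ + 1 ∧ c = δ₀ + 1) ∨
        (a = δ₀ + 1 ∧ c = δ₀ + 2) ∨ (a = δ₀ ∧ c = δ₀ + 2) := by omega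
    clear hodge
    rcases hcases with ⟨ha', hc'⟩ | ⟨ha', hc'⟩ | ⟨ha', hc'⟩ | ⟨ha', hc'⟩
    · exact Or.inl (by omega)
    · exact Or.inr (Or.inl (by omega))
    · have hb : b = δ₀ + 1 ∨ b = δ₀ + 3 := by omega
      refine Or.inr (Or.inr (Or.inl ⟨by omega, ha', hc', ?_⟩))
      rcases hb with hb | hb <;> omega
    · have hb : b = δ₀ ∨ b = δ₀ + 2 ∨ b = δ₀ + 4 ∨ (δ₀ = 2 ∧ b = 8) := by
        rcases key with hk0 | hk2
        · have hb4 : b ≤ δ₀ + 4 := by omega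
          have hb0 : δ₀ ≤ b := by omega
          have hbe : b % 2 = δ₀ % 2 := by omega
          omega
        · omega
      refine Or.inr (Or.inr (Or.inr ⟨by omega, ha', hc', ?_⟩))
      rcases hb with hb | hb | hb | hb <;> omega
  all_goals omega
end
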